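/- For every p ∈ [1,∞), every s with 0 < s ≤ 1/p, and every ℓ ∈ ℝ there exists a constant C > 0 such that for all ε ∈ (0,1] and all f : εℤ² → ℝ with ‖f‖_{W^{s,p}_ℓ(εℤ²)} < ∞, ‖E^ε f‖_{L^p_ℓ(ℝ²)} + sup{ |h|^{−s} ‖E^ε f(·+h) − E^ε f‖_{L^p_ℓ(ℝ²)} : h ∈ ℝ², 0 < |h| ≤ 1 } ≤ C ‖f‖_{W^{s,p}_ℓ(εℤ²)}. In other words, the extension operator E^ε is bounded from W^{s,p}_ℓ(εℤ²) into the weighted Besov space B^s_{p,∞,ℓ}(ℝ²), with operator norm bounded uniformly in ε ∈ (0,1]. -/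

import Mathlib

open MeasureTheory
open scoped ENNReal

/-- The polynomial weight `ρ_ℓ(y) = (1+|y|²)^{-ℓ/2}` on `ℝ²`. -/
noncomputable def rho2 (ℓ : ℝ) (y : ℝ × ℝ) : ℝ := (1 + y.1 ^ 2 + y.2 ^ 2) ^ (-ℓ / 2)

/-- The lattice point `(εn₁, εn₂) ∈ εℤ² ⊂ ℝ²` indexed by `n ∈ ℤ²`. -/
noncomputable def pt (ε : ℝ) (n : ℤ × ℤ) : ℝ × ℝ := (ε * (n.1 : ℝ), ε * (n.2 : ℝ))

/-- The square `Q_ε(z) = (z₁-ε/2, z₁+ε/2] × (z₂-ε/2, z₂+ε/2]`. -/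
def Qeps (ε : ℝ) (z : ℝ × ℝ) : Set (ℝ × ℝ) :=
  Set.Ioc (z.1 - ε / 2) (z.1 + ε / 2) ×ˢ Set.Ioc (z.2 - ε / 2) (z.2 + ε / 2)

/-- The discretization operator `D^ε f(z) = ε⁻² ∫_{Q_ε(z)} f(x) dx`. -/
noncomputable def Deps (ε : ℝ) (f : ℝ × ℝ → ℝ) (n : ℤ × ℤ) : ℝ :=
  (ε ^ 2)⁻¹ * ∫ x in Qeps ε (pt ε n), f x

/-- The index of the cell `Q_ε(z)` containing `t` in one coordinate:
`t ∈ (εn - ε/2, εn + ε/2]` iff `n = ⌈t/ε - 1/2⌉`. -/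
noncomputable def cellIdx (ε t : ℝ) : ℤ := ⌈t / ε - 1 / 2⌉

/-- The extension operator `E^ε`, producing the piecewise constant function with
`E^ε f = f(z)` on `Q_ε(z)`. -/
noncomputable def Eeps (ε : ℝ) (f : ℤ × ℤ → ℝ) (x : ℝ × ℝ) : ℝ :=
  f (cellIdx ε x.1, cellIdx ε x.2)

/-- The weighted norm `‖g‖_{L^p_ℓ(ℝ²)} = (∫_{ℝ²} |ρ_ℓ(x) g(x)|^p dx)^{1/p}`,
valued in `ℝ≥0∞`. -/
noncomputable def lpNormR2 (p ℓ : ℝ) (g : ℝ × ℝ → ℝ) : ℝ≥0∞ :=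
  (∫⁻ x : ℝ × ℝ, ENNReal.ofReal (|rho2 ℓ x * g x| ^ p)) ^ (1 / p)

/-- The weighted lattice norm `‖f‖_{L^p_ℓ(εℤ²)} = (ε² Σ_{z∈εℤ²} |ρ_ℓ(z) f(z)|^p)^{1/p}`,
valued in `ℝ≥0∞`. -/
noncomputable def lpNormLat (p ℓ ε : ℝ) (f : ℤ × ℤ → ℝ) : ℝ≥0∞ :=
  (ENNReal.ofReal (ε ^ 2) *
    ∑' n : ℤ × ℤ, ENNReal.ofReal (|rho2 ℓ (pt ε n) * f n| ^ p)) ^ (1 / p)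

/-- The Euclidean length of a point of `ℝ²`. -/
noncomputable def en2 (y : ℝ × ℝ) : ℝ := Real.sqrt (y.1 ^ 2 + y.2 ^ 2)

/-- The weighted lattice `L^p_ℓ` norm of the difference `f(·+k) − f`. -/
noncomputable def latDiffNorm (p ℓ ε : ℝ) (f : ℤ × ℤ → ℝ) (k : ℤ × ℤ) : ℝ≥0∞ :=
  (ENNReal.ofReal (ε ^ 2) *
    ∑' n : ℤ × ℤ, ENNReal.ofReal (rho2 ℓ (pt ε n) ^ p * |f (n + k) - f n| ^ p)) ^ (1 / p)

/-- The lattice fractional Sobolev norm `‖f‖_{W^{s,p}_ℓ(εℤ²)} = ‖f‖_{L^p_ℓ(εℤ²)} +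
sup{ |k|^{-s} ‖f(·+k) − f‖_{L^p_ℓ(εℤ²)} : k ∈ εℤ², 0 < |k| ≤ 1 }`. -/
noncomputable def latWNorm (s p ℓ ε : ℝ) (f : ℤ × ℤ → ℝ) : ℝ≥0∞ :=
  lpNormLat p ℓ ε f +
    ⨆ (k : ℤ × ℤ) (_ : 0 < en2 (pt ε k) ∧ en2 (pt ε k) ≤ 1),
      ENNReal.ofReal (en2 (pt ε k) ^ (-s)) * latDiffNorm p ℓ ε f k

/-- The difference-quotient norm of the weighted Besov space `B^s_{p,∞,ℓ}(ℝ²)`: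
`‖g‖_{L^p_ℓ} + sup{ |h|^{-s} ‖g(·+h) − g‖_{L^p_ℓ} : h ∈ ℝ², 0 < |h| ≤ 1 }`. -/
noncomputable def besovDiffNormR2 (s p ℓ : ℝ) (g : ℝ × ℝ → ℝ) : ℝ≥0∞ :=
  lpNormR2 p ℓ g +
    ⨆ (h : ℝ × ℝ) (_ : 0 < en2 h ∧ en2 h ≤ 1),
      ENNReal.ofReal (en2 h ^ (-s)) * lpNormR2 p ℓ (fun x => g (x + h) - g x)

/-!
Cut the plane into the cells `Q_ε(z)` and translate them all to `Q_ε(0)`. The weight varies only by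
a bounded factor within a cell, so `‖g‖ᵖ` in `L^p_ℓ(ℝ²)` is comparable to the average over
`x ∈ Q_ε(0)` of the `p`-th powers of the lattice norms of `n ↦ g(x + εn)`.

For `g = E^ε f` this lattice function is `f` itself. For `g = E^ε f(· + h) - E^ε f` it is
`f(· + k) - f`, where `k = k(x)` indexes the cell of `x + h`. It vanishes unless `x + h` leaves
`Q_ε(0)`, which happens on a proportion `≲ |h| / M` of the cell, `M = max(|h|, ε)`, and then
`|εk| ≤ 3 M`, so its norm is `≲ M^s ‖f‖_{W^{s,p}_ℓ}`. The `p`-th root gives the factor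
`(|h| / M)^{1/p} M^s ≤ |h|^s`, and this is where `s ≤ 1/p` enters.
-/

lemma en2_eq_norm (y : ℝ × ℝ) : en2 y = ‖WithLp.toLp 2 y‖ := by
  simp [en2, WithLp.prod_norm_eq_of_L2]

lemma en2_add_le (x y : ℝ × ℝ) : en2 (x + y) ≤ en2 x + en2 y := by
  simpa only [en2_eq_norm, WithLp.toLp_add] using norm_add_le _ _

lemma en2_sub_comm (x y : ℝ × ℝ) : en2 (x - y) = en2 (y - x) := by
  simpa only [en2_eq_norm, WithLp.toLp_sub] using norm_sub_rev _ _

lemma sq_en2 (y : ℝ × ℝ) : en2 y ^ 2 = y.1 ^ 2 + y.2 ^ 2 :=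
  Real.sq_sqrt (by positivity)

lemma en2_nonneg (y : ℝ × ℝ) : 0 ≤ en2 y := Real.sqrt_nonneg _

lemma abs_fst_le_en2 (y : ℝ × ℝ) : |y.1| ≤ en2 y :=
  Real.abs_le_sqrt (le_add_of_nonneg_right (sq_nonneg _))

lemma abs_snd_le_en2 (y : ℝ × ℝ) : |y.2| ≤ en2 y :=
  Real.abs_le_sqrt (le_add_of_nonneg_left (sq_nonneg _))

lemma en2_le_abs_add_abs (y : ℝ × ℝ) : en2 y ≤ |y.1| + |y.2| := by
  refine Real.sqrt_le_iff.2 ⟨by positivity, ?_⟩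
  rw [← sq_abs y.1, ← sq_abs y.2]
  nlinarith [abs_nonneg y.1, abs_nonneg y.2]

lemma rho2_pos (ℓ : ℝ) (y : ℝ × ℝ) : 0 < rho2 ℓ y := by
  unfold rho2; positivity

lemma measurable_rho2 (ℓ : ℝ) : Measurable (rho2 ℓ) := by
  unfold rho2; fun_prop

/-- An upper bound for the ratio of the values of `ρ_ℓ` at two points of distance at most `R`. -/
noncomputable def rhoRatio (ℓ R : ℝ) : ℝ := (2 * (1 + R ^ 2)) ^ (|ℓ| / 2)

lemma rhoRatio_pos (ℓ R : ℝ) : 0 < rhoRatio ℓ R := by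
  unfold rhoRatio; positivity

lemma one_add_sq_le_of_en2_sub_le {x y : ℝ × ℝ} {R : ℝ} (h : en2 (x - y) ≤ R) :
    1 + x.1 ^ 2 + x.2 ^ 2 ≤ 2 * (1 + R ^ 2) * (1 + y.1 ^ 2 + y.2 ^ 2) := by
  have hR : (x.1 - y.1) ^ 2 + (x.2 - y.2) ^ 2 ≤ R ^ 2 :=
    (sq_en2 (x - y)).symm.trans_le (pow_le_pow_left₀ (en2_nonneg _) h 2)
  nlinarith [sq_nonneg (x.1 - 2 * y.1), sq_nonneg (x.2 - 2 * y.2),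
    mul_nonneg (sq_nonneg R) (add_nonneg (sq_nonneg y.1) (sq_nonneg y.2))]

lemma rho2_le_rhoRatio_mul (ℓ : ℝ) {x y : ℝ × ℝ} {R : ℝ} (h : en2 (x - y) ≤ R) :
    rho2 ℓ x ≤ rhoRatio ℓ R * rho2 ℓ y := by
  have hxy := one_add_sq_le_of_en2_sub_le h
  have hyx := one_add_sq_le_of_en2_sub_le (en2_sub_comm x y ▸ h)
  unfold rho2 rhoRatio
  have hx : 0 < 1 + x.1 ^ 2 + x.2 ^ 2 := by positivity
  have hy : 0 < 1 + y.1 ^ 2 + y.2 ^ 2 := by positivity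
  rcases le_total 0 ℓ with hℓ | hℓ
  · rw [abs_of_nonneg hℓ, neg_div, Real.rpow_neg hx.le, Real.rpow_neg hy.le, ← div_eq_mul_inv,
      inv_le_comm₀ (by positivity) (by positivity), inv_div,
      div_le_iff₀ (by positivity), mul_comm, ← Real.mul_rpow (by positivity) hx.le]
    exact Real.rpow_le_rpow hy.le hyx (by positivity)
  · rw [abs_of_nonpos hℓ, ← Real.mul_rpow (by positivity) hy.le]
    exact Real.rpow_le_rpow hx.le hxy (by linarith)

lemma ofReal_abs_rho2_mul_rpow_le (ℓ : ℝ) {p R : ℝ} (hp : 0 ≤ p) {x y : ℝ × ℝ}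
    (h : en2 (x - y) ≤ R) (d : ℝ) :
    ENNReal.ofReal (|rho2 ℓ x * d| ^ p) ≤
      ENNReal.ofReal (rhoRatio ℓ R) ^ p * ENNReal.ofReal (|rho2 ℓ y * d| ^ p) := by
  have hratio := (rhoRatio_pos ℓ R).le
  rw [ENNReal.ofReal_rpow_of_nonneg hratio hp, ← ENNReal.ofReal_mul (by positivity),
    ← Real.mul_rpow hratio (abs_nonneg _), abs_mul, abs_mul, abs_of_pos (rho2_pos ℓ x),
    abs_of_pos (rho2_pos ℓ y), ← mul_assoc]
  have := (rho2_pos ℓ x).le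
  gcongr
  exact rho2_le_rhoRatio_mul ℓ h

/-- The index of the cell of `εℤ²` containing a point of the plane. -/
noncomputable def cellIdx2 (ε : ℝ) (x : ℝ × ℝ) : ℤ × ℤ := (cellIdx ε x.1, cellIdx ε x.2)

lemma cellIdx_eq_iff {ε : ℝ} (hε : 0 < ε) (t : ℝ) (n : ℤ) :
    cellIdx ε t = n ↔ t ∈ Set.Ioc (ε * n - ε / 2) (ε * n + ε / 2) := by
  rw [cellIdx, Int.ceil_eq_iff, Set.mem_Ioc, sub_le_iff_le_add, div_le_iff₀ hε,
    lt_sub_iff_add_lt, lt_div_iff₀ hε]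
  ring_nf

lemma cellIdx2_eq_iff {ε : ℝ} (hε : 0 < ε) (x : ℝ × ℝ) (n : ℤ × ℤ) :
    cellIdx2 ε x = n ↔ x ∈ Qeps ε (pt ε n) := by
  rw [cellIdx2, Prod.ext_iff, cellIdx_eq_iff hε, cellIdx_eq_iff hε]
  rfl

lemma pt_zero (ε : ℝ) : pt ε 0 = 0 := by simp [pt]

lemma pt_add (ε : ℝ) (m n : ℤ × ℤ) : pt ε (m + n) = pt ε m + pt ε n := by
  simp [pt, mul_add]

lemma cellIdx2_eq_zero_iff {ε : ℝ} (hε : 0 < ε) (x : ℝ × ℝ) :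
    cellIdx2 ε x = 0 ↔ x ∈ Qeps ε 0 := by
  rw [cellIdx2_eq_iff hε, pt_zero]

lemma cellIdx_add_mul_intCast {ε : ℝ} (hε : ε ≠ 0) (t : ℝ) (n : ℤ) :
    cellIdx ε (t + ε * n) = cellIdx ε t + n := by
  rw [cellIdx, cellIdx, ← Int.ceil_add_intCast, add_div, mul_div_cancel_left₀ _ hε,
    sub_add_eq_add_sub]

lemma cellIdx2_add_pt {ε : ℝ} (hε : ε ≠ 0) (x : ℝ × ℝ) (n : ℤ × ℤ) :
    cellIdx2 ε (x + pt ε n) = cellIdx2 ε x + n :=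
  Prod.ext (cellIdx_add_mul_intCast hε _ _) (cellIdx_add_mul_intCast hε _ _)

lemma measurable_cellIdx2 (ε : ℝ) : Measurable (cellIdx2 ε) := by
  unfold cellIdx2 cellIdx; fun_prop

lemma measurable_Eeps (ε : ℝ) (f : ℤ × ℤ → ℝ) : Measurable (Eeps ε f) :=
  (measurable_of_countable f).comp (measurable_cellIdx2 ε)

lemma Eeps_add_pt {ε : ℝ} (hε : ε ≠ 0) (f : ℤ × ℤ → ℝ) (x : ℝ × ℝ) (n : ℤ × ℤ) :
    Eeps ε f (x + pt ε n) = f (n + cellIdx2 ε x) := by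
  rw [add_comm n, ← cellIdx2_add_pt hε]; rfl

lemma measurableSet_Qeps (ε : ℝ) (z : ℝ × ℝ) : MeasurableSet (Qeps ε z) :=
  measurableSet_Ioc.prod measurableSet_Ioc

lemma volume_Qeps {ε : ℝ} (hε : 0 ≤ ε) (z : ℝ × ℝ) :
    volume (Qeps ε z) = ENNReal.ofReal (ε ^ 2) := by
  rw [Qeps, Measure.volume_eq_prod, Measure.prod_prod, Real.volume_Ioc, Real.volume_Ioc,
    ← ENNReal.ofReal_mul (by linarith)]
  ring_nf

lemma en2_sub_le_of_mem_Qeps {ε : ℝ} {x z : ℝ × ℝ} (hx : x ∈ Qeps ε z) : en2 (x - z) ≤ ε := by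
  obtain ⟨⟨h₁, h₁'⟩, h₂, h₂'⟩ := hx
  have hfst : |x.1 - z.1| ≤ ε / 2 := abs_le.2 ⟨by linarith, by linarith⟩
  have hsnd : |x.2 - z.2| ≤ ε / 2 := abs_le.2 ⟨by linarith, by linarith⟩
  calc en2 (x - z) ≤ |x.1 - z.1| + |x.2 - z.2| := en2_le_abs_add_abs _
    _ ≤ ε := by linarith

lemma en2_pt_cellIdx2_add_le {ε : ℝ} (hε : 0 < ε) {x : ℝ × ℝ} (hx : x ∈ Qeps ε 0)
    (h : ℝ × ℝ) : en2 (pt ε (cellIdx2 ε (x + h))) ≤ en2 h + 2 * ε := by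
  set z := pt ε (cellIdx2 ε (x + h))
  have hxh : en2 (z - (x + h)) ≤ ε :=
    en2_sub_comm z _ ▸ en2_sub_le_of_mem_Qeps ((cellIdx2_eq_iff hε _ _).1 rfl)
  have hx0 : en2 x ≤ ε := by simpa using en2_sub_le_of_mem_Qeps hx
  calc en2 z = en2 (z - (x + h) + (x + h)) := by rw [sub_add_cancel]
    _ ≤ en2 (z - (x + h)) + (en2 x + en2 h) :=
      (en2_add_le _ _).trans (add_le_add_right (en2_add_le _ _) _)
    _ ≤ en2 h + 2 * ε := by linarith

lemma lintegral_eq_tsum_setLIntegral_Qeps {ε : ℝ} (hε : 0 < ε) (G : ℝ × ℝ → ℝ≥0∞) :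
    ∫⁻ x, G x = ∑' n : ℤ × ℤ, ∫⁻ x in Qeps ε 0, G (x + pt ε n) := by
  have hfiber (n : ℤ × ℤ) : cellIdx2 ε ⁻¹' {n} = Qeps ε (pt ε n) :=
    Set.ext fun x => cellIdx2_eq_iff hε x n
  have hcover : ⋃ n, cellIdx2 ε ⁻¹' {n} = Set.univ := by
    rw [← Set.preimage_iUnion, Set.iUnion_of_singleton, Set.preimage_univ]
  rw [← setLIntegral_univ, ← hcover, lintegral_iUnion
    (fun n => measurable_cellIdx2 ε (measurableSet_singleton n)) (pairwise_disjoint_fiber _)]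
  refine tsum_congr fun n => ?_
  have htranslate : (· + pt ε n) ⁻¹' Qeps ε (pt ε n) = Qeps ε 0 := by
    ext x
    rw [Set.mem_preimage, ← cellIdx2_eq_iff hε, cellIdx2_add_pt hε.ne', add_eq_right,
      cellIdx2_eq_zero_iff hε]
  rw [hfiber, ← htranslate]
  exact ((measurePreserving_add_right volume (pt ε n)).setLIntegral_comp_preimage_emb
    (MeasurableEquiv.addRight _).measurableEmbedding G _).symm

lemma volume_Ioc_diff_preimage_add_le (a b h : ℝ) :
    volume (Set.Ioc a b \ (· + h) ⁻¹' Set.Ioc a b) ≤ ENNReal.ofReal |h| := by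
  rcases le_total 0 h with hh | hh
  · calc volume (Set.Ioc a b \ (· + h) ⁻¹' Set.Ioc a b)
        ≤ volume (Set.Ioc (b - h) b) := measure_mono fun t ⟨ht, hth⟩ =>
          ⟨lt_of_not_ge fun hb => hth ⟨by linarith [ht.1], by linarith⟩, ht.2⟩
      _ = ENNReal.ofReal |h| := by rw [Real.volume_Ioc, sub_sub_cancel, abs_of_nonneg hh]
  · calc volume (Set.Ioc a b \ (· + h) ⁻¹' Set.Ioc a b)
        ≤ volume (Set.Ioc a (a - h)) := measure_mono fun t ⟨ht, hth⟩ =>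
          ⟨ht.1, le_of_not_gt fun ha => hth ⟨by linarith, by linarith [ht.2]⟩⟩
      _ = ENNReal.ofReal |h| := by
        rw [Real.volume_Ioc, sub_sub_cancel_left, abs_of_nonpos hh]

lemma volume_Qeps_diff_preimage_add_le {ε : ℝ} (hε : 0 ≤ ε) (z h : ℝ × ℝ) :
    volume (Qeps ε z \ (· + h) ⁻¹' Qeps ε z) ≤ ENNReal.ofReal (2 * ε * en2 h) := by
  set I := Set.Ioc (z.1 - ε / 2) (z.1 + ε / 2)
  set J := Set.Ioc (z.2 - ε / 2) (z.2 + ε / 2)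
  have hI : volume I = ENNReal.ofReal ε := by rw [Real.volume_Ioc]; ring_nf
  have hJ : volume J = ENNReal.ofReal ε := by rw [Real.volume_Ioc]; ring_nf
  have hsub : Qeps ε z \ (· + h) ⁻¹' Qeps ε z ⊆
      (I \ (· + h.1) ⁻¹' I) ×ˢ J ∪ I ×ˢ (J \ (· + h.2) ⁻¹' J) := fun x ⟨hx, hxh⟩ =>
    (not_and_or.1 hxh).imp (fun h₁ => ⟨⟨hx.1, h₁⟩, hx.2⟩) (fun h₂ => ⟨hx.1, hx.2, h₂⟩)
  calc volume (Qeps ε z \ (· + h) ⁻¹' Qeps ε z)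
      ≤ volume (I \ (· + h.1) ⁻¹' I) * volume J + volume I * volume (J \ (· + h.2) ⁻¹' J) := by
        rw [← Measure.prod_prod, ← Measure.prod_prod]
        exact (measure_mono hsub).trans (measure_union_le _ _)
    _ ≤ ENNReal.ofReal (en2 h) * ENNReal.ofReal ε + ENNReal.ofReal ε * ENNReal.ofReal (en2 h) := by
        rw [hI, hJ]
        gcongr
        · exact (volume_Ioc_diff_preimage_add_le _ _ _).trans
            (ENNReal.ofReal_le_ofReal (abs_fst_le_en2 h))
        · exact (volume_Ioc_diff_preimage_add_le _ _ _).trans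
            (ENNReal.ofReal_le_ofReal (abs_snd_le_en2 h))
    _ = ENNReal.ofReal (2 * ε * en2 h) := by
        have := en2_nonneg h
        rw [← ENNReal.ofReal_mul hε, ← ENNReal.ofReal_mul this, ← ENNReal.ofReal_add
          (by positivity) (by positivity)]
        ring_nf

lemma lpNormR2_rpow {p : ℝ} (hp : p ≠ 0) (ℓ : ℝ) (g : ℝ × ℝ → ℝ) :
    lpNormR2 p ℓ g ^ p = ∫⁻ x : ℝ × ℝ, ENNReal.ofReal (|rho2 ℓ x * g x| ^ p) := by
  rw [lpNormR2, one_div, ENNReal.rpow_inv_rpow hp]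

lemma lpNormLat_rpow {p : ℝ} (hp : p ≠ 0) (ℓ ε : ℝ) (f : ℤ × ℤ → ℝ) :
    lpNormLat p ℓ ε f ^ p = ENNReal.ofReal (ε ^ 2) *
      ∑' n : ℤ × ℤ, ENNReal.ofReal (|rho2 ℓ (pt ε n) * f n| ^ p) := by
  rw [lpNormLat, one_div, ENNReal.rpow_inv_rpow hp]

lemma lpNormLat_eq_eLpNorm {p : ℝ} (hp : 0 < p) (ℓ ε : ℝ) (f : ℤ × ℤ → ℝ) :
    lpNormLat p ℓ ε f = eLpNorm (fun n => rho2 ℓ (pt ε n) * f n) (ENNReal.ofReal p)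
      (ENNReal.ofReal (ε ^ 2) • Measure.count) := by
  rw [eLpNorm_eq_lintegral_rpow_enorm_toReal (by simpa) ENNReal.ofReal_ne_top,
    lintegral_smul_measure, lintegral_count, ENNReal.toReal_ofReal hp.le, lpNormLat]
  simp only [Real.enorm_eq_ofReal_abs, ENNReal.ofReal_rpow_of_nonneg (abs_nonneg _) hp.le,
    smul_eq_mul]

lemma lpNormLat_sub_le {p : ℝ} (hp : 0 < p) (ℓ ε : ℝ) (f g : ℤ × ℤ → ℝ) :
    lpNormLat p ℓ ε (f - g) ≤
      ENNReal.LpAddConst (ENNReal.ofReal p) * (lpNormLat p ℓ ε f + lpNormLat p ℓ ε g) := by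
  simp only [lpNormLat_eq_eLpNorm hp, Pi.sub_apply, mul_sub]
  exact eLpNorm_sub_le' (measurable_of_countable _).aestronglyMeasurable
    (measurable_of_countable _).aestronglyMeasurable _

lemma lpNormLat_comp_add_right_le {p : ℝ} (hp : 0 < p) (ℓ : ℝ) {ε R : ℝ} (f : ℤ × ℤ → ℝ)
    {k : ℤ × ℤ} (hk : en2 (pt ε k) ≤ R) :
    lpNormLat p ℓ ε (fun n => f (n + k)) ≤
      ENNReal.ofReal (rhoRatio ℓ R) * lpNormLat p ℓ ε f := by
  have hpoint (n : ℤ × ℤ) : ENNReal.ofReal (|rho2 ℓ (pt ε n) * f (n + k)| ^ p) ≤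
      ENNReal.ofReal (rhoRatio ℓ R) ^ p *
        ENNReal.ofReal (|rho2 ℓ (pt ε (n + k)) * f (n + k)| ^ p) := by
    refine ofReal_abs_rho2_mul_rpow_le ℓ hp.le ?_ _
    rwa [en2_sub_comm, pt_add, add_sub_cancel_left]
  rw [← ENNReal.rpow_le_rpow_iff hp, ENNReal.mul_rpow_of_nonneg _ _ hp.le,
    lpNormLat_rpow hp.ne', lpNormLat_rpow hp.ne', mul_left_comm,
    ← (Equiv.addRight k).tsum_eq (fun n => ENNReal.ofReal (|rho2 ℓ (pt ε n) * f n| ^ p)),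
    ← ENNReal.tsum_mul_left (a := ENNReal.ofReal (rhoRatio ℓ R) ^ p)]
  exact mul_le_mul_right (ENNReal.tsum_le_tsum hpoint) _

lemma latDiffNorm_eq_lpNormLat (p ℓ ε : ℝ) (f : ℤ × ℤ → ℝ) (k : ℤ × ℤ) :
    latDiffNorm p ℓ ε f k = lpNormLat p ℓ ε (fun n => f (n + k) - f n) := by
  simp only [latDiffNorm, lpNormLat, abs_mul, abs_of_pos (rho2_pos ℓ _),
    Real.mul_rpow (rho2_pos ℓ _).le (abs_nonneg _)]

lemma latDiffNorm_zero {p : ℝ} (hp : 0 < p) (ℓ ε : ℝ) (f : ℤ × ℤ → ℝ) :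
    latDiffNorm p ℓ ε f 0 = 0 := by
  simp [latDiffNorm, Real.zero_rpow hp.ne', hp]

lemma latDiffNorm_le_lpNormLat {p : ℝ} (hp : 0 < p) (ℓ : ℝ) {ε R : ℝ} (f : ℤ × ℤ → ℝ)
    {k : ℤ × ℤ} (hk : en2 (pt ε k) ≤ R) :
    latDiffNorm p ℓ ε f k ≤ ENNReal.LpAddConst (ENNReal.ofReal p) *
      (ENNReal.ofReal (rhoRatio ℓ R) + 1) * lpNormLat p ℓ ε f := by
  calc latDiffNorm p ℓ ε f k
      = lpNormLat p ℓ ε ((fun n => f (n + k)) - f) := latDiffNorm_eq_lpNormLat ..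
    _ ≤ ENNReal.LpAddConst (ENNReal.ofReal p) *
          (lpNormLat p ℓ ε (fun n => f (n + k)) + lpNormLat p ℓ ε f) := lpNormLat_sub_le hp ..
    _ ≤ ENNReal.LpAddConst (ENNReal.ofReal p) *
          (ENNReal.ofReal (rhoRatio ℓ R) * lpNormLat p ℓ ε f + lpNormLat p ℓ ε f) := by
        gcongr; exact lpNormLat_comp_add_right_le hp ℓ f hk
    _ = _ := by ring

lemma latDiffNorm_le_rpow_mul_latWNorm (s p ℓ : ℝ) {ε : ℝ} (f : ℤ × ℤ → ℝ) {k : ℤ × ℤ}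
    (hk₀ : 0 < en2 (pt ε k)) (hk₁ : en2 (pt ε k) ≤ 1) :
    latDiffNorm p ℓ ε f k ≤ ENNReal.ofReal (en2 (pt ε k) ^ s) * latWNorm s p ℓ ε f := by
  set e := en2 (pt ε k)
  calc latDiffNorm p ℓ ε f k
      = ENNReal.ofReal (e ^ s) * (ENNReal.ofReal (e ^ (-s)) * latDiffNorm p ℓ ε f k) := by
        rw [← mul_assoc, ← ENNReal.ofReal_mul (by positivity), ← Real.rpow_add hk₀,
          add_neg_cancel, Real.rpow_zero, ENNReal.ofReal_one, one_mul]
    _ ≤ ENNReal.ofReal (e ^ s) * latWNorm s p ℓ ε f := by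
        gcongr
        exact le_add_left (le_iSup₂ (f := fun k (_ : 0 < en2 (pt ε k) ∧ en2 (pt ε k) ≤ 1) =>
          ENNReal.ofReal (en2 (pt ε k) ^ (-s)) * latDiffNorm p ℓ ε f k) k ⟨hk₀, hk₁⟩)

lemma en2_pt_pos {ε : ℝ} (hε : ε ≠ 0) {k : ℤ × ℤ} (hk : k ≠ 0) : 0 < en2 (pt ε k) := by
  refine (en2_nonneg _).lt_of_ne' fun h => hk ?_
  have hfst := abs_nonpos_iff.1 ((abs_fst_le_en2 (pt ε k)).trans h.le)
  have hsnd := abs_nonpos_iff.1 ((abs_snd_le_en2 (pt ε k)).trans h.le)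
  simp only [pt, mul_eq_zero, hε, false_or, Int.cast_eq_zero] at hfst hsnd
  exact Prod.ext hfst hsnd

/-- The constant in the bound by `M ^ s ‖f‖_{W^{s,p}_ℓ}` of the norms of the lattice differences of
`f` with step at most `3 M`, for `M ≤ 1`: the `max` covers both the steps of length at most `1`,
controlled by the supremum in the Sobolev norm, and the longer ones, controlled by `‖f‖_{L^p_ℓ}`. -/
noncomputable def latDiffConst (p s ℓ : ℝ) : ℝ≥0∞ :=
  max 1 (ENNReal.LpAddConst (ENNReal.ofReal p) * (ENNReal.ofReal (rhoRatio ℓ 3) + 1)) *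
    ENNReal.ofReal (3 ^ |s|)

lemma latDiffConst_ne_top (p s ℓ : ℝ) : latDiffConst p s ℓ ≠ ⊤ := by
  have := ENNReal.LpAddConst_lt_top (ENNReal.ofReal p)
  unfold latDiffConst
  finiteness

lemma latDiffNorm_le_latWNorm {p : ℝ} (hp : 0 < p) (s ℓ : ℝ) {ε M : ℝ} (hε : ε ≠ 0)
    (hM : M ≤ 1) (f : ℤ × ℤ → ℝ) {k : ℤ × ℤ} (hk : k ≠ 0)
    (hkM : en2 (pt ε k) ≤ 3 * M) :
    latDiffNorm p ℓ ε f k ≤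
      latDiffConst p s ℓ * ENNReal.ofReal (M ^ s) * latWNorm s p ℓ ε f := by
  have hM₀ : 0 < M := by linarith [en2_pt_pos hε hk]
  rw [latDiffConst, mul_assoc (max _ _), ← ENNReal.ofReal_mul (by positivity)]
  -- If `3 ^ |s| * M ^ s` is not small, in particular whenever `s ≤ 0`, the `L^p` part suffices.
  by_cases hlarge : 1 ≤ 3 ^ |s| * M ^ s
  · calc latDiffNorm p ℓ ε f k
        ≤ ENNReal.LpAddConst (ENNReal.ofReal p) * (ENNReal.ofReal (rhoRatio ℓ 3) + 1) *
            lpNormLat p ℓ ε f := latDiffNorm_le_lpNormLat hp ℓ f (by linarith)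
      _ ≤ _ := mul_le_mul' (le_mul_of_le_of_one_le (le_max_right _ _)
          (ENNReal.one_le_ofReal.2 hlarge)) le_self_add
  · have hs : 0 < s := by
      by_contra! hs
      exact hlarge (one_le_mul_of_one_le_of_one_le
        (Real.one_le_rpow (by norm_num) (abs_nonneg s))
        (Real.one_le_rpow_of_pos_of_le_one_of_nonpos hM₀ hM hs))
    rw [abs_of_pos hs, ← Real.mul_rpow (by norm_num) hM₀.le] at hlarge ⊢
    have h3M : 3 * M ≤ 1 := by
      by_contra! h3M
      exact hlarge (Real.one_le_rpow h3M.le hs.le)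
    calc latDiffNorm p ℓ ε f k
        ≤ ENNReal.ofReal (en2 (pt ε k) ^ s) * latWNorm s p ℓ ε f :=
          latDiffNorm_le_rpow_mul_latWNorm s p ℓ f (en2_pt_pos hε hk) (hkM.trans h3M)
      _ ≤ ENNReal.ofReal ((3 * M) ^ s) * latWNorm s p ℓ ε f := by
          have := en2_nonneg (pt ε k)
          gcongr
      _ ≤ _ := by
          gcongr
          exact le_mul_of_one_le_left' (le_max_left _ _)

lemma lpNormR2_rpow_le_setLAverage_lpNormLat {p : ℝ} (hp : 0 < p) (ℓ : ℝ) {ε R : ℝ}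
    (hε : 0 < ε) (hεR : ε ≤ R) {g : ℝ × ℝ → ℝ} (hg : Measurable g) :
    lpNormR2 p ℓ g ^ p ≤ ENNReal.ofReal (rhoRatio ℓ R) ^ p *
      ⨍⁻ x in Qeps ε 0, lpNormLat p ℓ ε (fun n => g (x + pt ε n)) ^ p ∂volume := by
  have hε2 : ENNReal.ofReal (ε ^ 2) ≠ 0 := by simpa using hε.ne'
  calc lpNormR2 p ℓ g ^ p
      = ∑' n, ∫⁻ x in Qeps ε 0,
          ENNReal.ofReal (|rho2 ℓ (x + pt ε n) * g (x + pt ε n)| ^ p) := by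
        rw [lpNormR2_rpow hp.ne', lintegral_eq_tsum_setLIntegral_Qeps hε]
    _ = ∫⁻ x in Qeps ε 0, ∑' n,
          ENNReal.ofReal (|rho2 ℓ (x + pt ε n) * g (x + pt ε n)| ^ p) := by
        have := measurable_rho2 ℓ
        exact (lintegral_tsum fun n => by fun_prop).symm
    _ ≤ ∫⁻ x in Qeps ε 0, ENNReal.ofReal (rhoRatio ℓ R) ^ p *
          ∑' n, ENNReal.ofReal (|rho2 ℓ (pt ε n) * g (x + pt ε n)| ^ p) := by
        refine setLIntegral_mono' (measurableSet_Qeps ε 0) fun x hx => ?_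
        rw [← ENNReal.tsum_mul_left]
        gcongr with n
        exact ofReal_abs_rho2_mul_rpow_le ℓ hp.le
          (by simpa using (en2_sub_le_of_mem_Qeps hx).trans hεR) _
    _ = _ := by
        simp only [lpNormLat_rpow hp.ne']
        rw [setLAverage_eq, volume_Qeps hε.le, lintegral_const_mul' _ _ (by finiteness),
          lintegral_const_mul' _ _ ENNReal.ofReal_ne_top,
          ENNReal.mul_div_right_comm, ENNReal.div_self hε2 ENNReal.ofReal_ne_top, one_mul]

lemma lpNormR2_Eeps_le {p : ℝ} (hp : 0 < p) (ℓ : ℝ) {ε R : ℝ} (hε : 0 < ε) (hεR : ε ≤ R)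
    (f : ℤ × ℤ → ℝ) :
    lpNormR2 p ℓ (Eeps ε f) ≤ ENNReal.ofReal (rhoRatio ℓ R) * lpNormLat p ℓ ε f := by
  have hvol₀ : volume (Qeps ε 0) ≠ 0 := by simpa [volume_Qeps hε.le] using hε.ne'
  have hvol : volume (Qeps ε 0) ≠ ⊤ := by simp [volume_Qeps hε.le]
  rw [← ENNReal.rpow_le_rpow_iff hp, ENNReal.mul_rpow_of_nonneg _ _ hp.le]
  refine (lpNormR2_rpow_le_setLAverage_lpNormLat hp ℓ hε hεR
    (measurable_Eeps ε f)).trans_eq ?_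
  rw [← setLAverage_const hvol₀ hvol (lpNormLat p ℓ ε f ^ p), setLAverage_eq, setLAverage_eq]
  congr 2
  refine setLIntegral_congr_fun (measurableSet_Qeps ε 0) fun x hx => ?_
  simp only [Eeps_add_pt hε.ne', (cellIdx2_eq_zero_iff hε x).2 hx, add_zero]

lemma volume_Qeps_diff_preimage_add_le_mul {ε : ℝ} (hε : 0 < ε) (z h : ℝ × ℝ) :
    volume (Qeps ε z \ (· + h) ⁻¹' Qeps ε z) ≤
      ENNReal.ofReal (2 * (en2 h / max (en2 h) ε)) * volume (Qeps ε z) := by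
  rcases le_total (en2 h) ε with hle | hle
  · refine (volume_Qeps_diff_preimage_add_le hε.le z h).trans_eq ?_
    have := en2_nonneg h
    rw [max_eq_right hle, volume_Qeps hε.le, ← ENNReal.ofReal_mul (by positivity)]
    congr 1
    field_simp
  · rw [max_eq_left hle, div_self (hε.trans_le hle).ne']
    exact (measure_mono Set.sdiff_subset).trans (le_mul_of_one_le_left' (by simp))

lemma setLAverage_latDiffNorm_cellIdx2_rpow_le {p : ℝ} (hp : 0 < p) (ℓ : ℝ) {ε : ℝ}
    (hε : 0 < ε) (f : ℤ × ℤ → ℝ) (h : ℝ × ℝ) {Y : ℝ≥0∞}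
    (hY : ∀ k : ℤ × ℤ, k ≠ 0 → en2 (pt ε k) ≤ en2 h + 2 * ε → latDiffNorm p ℓ ε f k ≤ Y) :
    ⨍⁻ x in Qeps ε 0, latDiffNorm p ℓ ε f (cellIdx2 ε (x + h)) ^ p ∂volume ≤
      ENNReal.ofReal (2 * (en2 h / max (en2 h) ε)) * Y ^ p := by
  set J := Qeps ε 0 \ (· + h) ⁻¹' Qeps ε 0
  have hJ : MeasurableSet J := (measurableSet_Qeps ε 0).diff
    (measurable_add_const h (measurableSet_Qeps ε 0))
  have hpoint : ∀ x ∈ Qeps ε 0,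
      latDiffNorm p ℓ ε f (cellIdx2 ε (x + h)) ^ p ≤ J.indicator (fun _ => Y ^ p) x := by
    intro x hx
    by_cases hxh : x + h ∈ Qeps ε 0
    · rw [(cellIdx2_eq_zero_iff hε _).2 hxh, latDiffNorm_zero hp, ENNReal.zero_rpow_of_pos hp]
      exact zero_le
    · rw [Set.indicator_of_mem (show x ∈ J from ⟨hx, hxh⟩)]
      gcongr
      exact hY _ (mt (cellIdx2_eq_zero_iff hε _).1 hxh) (en2_pt_cellIdx2_add_le hε hx h)
  rw [setLAverage_eq]
  refine ENNReal.div_le_of_le_mul ?_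
  calc ∫⁻ x in Qeps ε 0, latDiffNorm p ℓ ε f (cellIdx2 ε (x + h)) ^ p
      ≤ ∫⁻ x in Qeps ε 0, J.indicator (fun _ => Y ^ p) x :=
        setLIntegral_mono' (measurableSet_Qeps ε 0) hpoint
    _ ≤ ∫⁻ x, J.indicator (fun _ => Y ^ p) x := setLIntegral_le_lintegral _ _
    _ = Y ^ p * volume J := lintegral_indicator_const hJ _
    _ ≤ Y ^ p * (ENNReal.ofReal (2 * (en2 h / max (en2 h) ε)) * volume (Qeps ε 0)) := by
        gcongr
        exact volume_Qeps_diff_preimage_add_le_mul hε 0 h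
    _ = _ := by ring

lemma lpNormR2_Eeps_add_sub_le {p : ℝ} (hp : 0 < p) (ℓ : ℝ) {ε R : ℝ} (hε : 0 < ε)
    (hεR : ε ≤ R) (f : ℤ × ℤ → ℝ) (h : ℝ × ℝ) {Y : ℝ≥0∞}
    (hY : ∀ k : ℤ × ℤ, k ≠ 0 → en2 (pt ε k) ≤ en2 h + 2 * ε → latDiffNorm p ℓ ε f k ≤ Y) :
    lpNormR2 p ℓ (fun x => Eeps ε f (x + h) - Eeps ε f x) ≤
      ENNReal.ofReal (rhoRatio ℓ R) *
        ENNReal.ofReal (2 * (en2 h / max (en2 h) ε)) ^ (1 / p) * Y := by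
  have hmeas : Measurable fun x => Eeps ε f (x + h) - Eeps ε f x :=
    ((measurable_Eeps ε f).comp (measurable_add_const h)).sub (measurable_Eeps ε f)
  have hdiff : ∀ x ∈ Qeps ε 0,
      lpNormLat p ℓ ε (fun n => Eeps ε f (x + pt ε n + h) - Eeps ε f (x + pt ε n)) ^ p =
        latDiffNorm p ℓ ε f (cellIdx2 ε (x + h)) ^ p := fun x hx => by
    simp only [latDiffNorm_eq_lpNormLat, add_right_comm x _ h, Eeps_add_pt hε.ne',
      (cellIdx2_eq_zero_iff hε x).2 hx, add_zero]
  rw [← ENNReal.rpow_le_rpow_iff hp, ENNReal.mul_rpow_of_nonneg _ _ hp.le,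
    ENNReal.mul_rpow_of_nonneg _ _ hp.le, one_div, ENNReal.rpow_inv_rpow hp.ne', mul_assoc]
  refine (lpNormR2_rpow_le_setLAverage_lpNormLat hp ℓ hε hεR hmeas).trans ?_
  gcongr
  rw [setLAverage_eq, setLIntegral_congr_fun (measurableSet_Qeps ε 0) hdiff, ← setLAverage_eq]
  exact setLAverage_latDiffNorm_cellIdx2_rpow_le hp ℓ hε f h hY

lemma div_rpow_mul_rpow_le {a M s t : ℝ} (ha : 0 < a) (haM : a ≤ M) (hst : s ≤ t) :
    (a / M) ^ t * M ^ s ≤ a ^ s := by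
  have hM : 0 < M := ha.trans_le haM
  calc (a / M) ^ t * M ^ s ≤ (a / M) ^ s * M ^ s := mul_le_mul_of_nonneg_right
        (Real.rpow_le_rpow_of_exponent_ge (by positivity) ((div_le_one hM).2 haM) hst)
        (by positivity)
    _ = a ^ s := by rw [← Real.mul_rpow (by positivity) hM.le, div_mul_cancel₀ _ hM.ne']

lemma rpow_neg_mul_mul_div_rpow_mul_rpow_le {a c M s t : ℝ} (ha : 0 < a) (hc : 0 ≤ c)
    (haM : a ≤ M) (hst : s ≤ t) : a ^ (-s) * ((c * (a / M)) ^ t * M ^ s) ≤ c ^ t := by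
  have hM : 0 < M := ha.trans_le haM
  rw [Real.mul_rpow hc (div_nonneg ha.le hM.le), mul_assoc, mul_left_comm, Real.rpow_neg ha.le]
  exact mul_le_of_le_one_right (by positivity)
    ((inv_mul_le_one₀ (by positivity)).2 (div_rpow_mul_rpow_le ha haM hst))

lemma rpow_neg_mul_lpNormR2_Eeps_add_sub_le {p s : ℝ} (hp : 0 < p) (hsp : s ≤ 1 / p) (ℓ : ℝ)
    {ε : ℝ} (hε : 0 < ε) (hε₁ : ε ≤ 1) (f : ℤ × ℤ → ℝ) {h : ℝ × ℝ} (hh₀ : 0 < en2 h)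
    (hh₁ : en2 h ≤ 1) :
    ENNReal.ofReal (en2 h ^ (-s)) * lpNormR2 p ℓ (fun x => Eeps ε f (x + h) - Eeps ε f x) ≤
      ENNReal.ofReal (rhoRatio ℓ 1) * ENNReal.ofReal (2 ^ (1 / p)) * latDiffConst p s ℓ *
        latWNorm s p ℓ ε f := by
  set a := en2 h
  set M := max a ε
  have haM : a ≤ M := le_max_left _ _
  have hεM : ε ≤ M := le_max_right _ _
  have : 0 < M := hh₀.trans_le haM
  have hY (k : ℤ × ℤ) (hk₀ : k ≠ 0) (hk : en2 (pt ε k) ≤ a + 2 * ε) :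
      latDiffNorm p ℓ ε f k ≤ latDiffConst p s ℓ * ENNReal.ofReal (M ^ s) * latWNorm s p ℓ ε f :=
    latDiffNorm_le_latWNorm hp s ℓ hε.ne' (max_le hh₁ hε₁) f hk₀ (by linarith)
  calc ENNReal.ofReal (a ^ (-s)) * lpNormR2 p ℓ (fun x => Eeps ε f (x + h) - Eeps ε f x)
      ≤ ENNReal.ofReal (a ^ (-s)) * (ENNReal.ofReal (rhoRatio ℓ 1) *
          ENNReal.ofReal (2 * (a / M)) ^ (1 / p) *
            (latDiffConst p s ℓ * ENNReal.ofReal (M ^ s) * latWNorm s p ℓ ε f)) := by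
        gcongr
        exact lpNormR2_Eeps_add_sub_le hp ℓ hε hε₁ f h hY
    _ = ENNReal.ofReal (rhoRatio ℓ 1) *
          ENNReal.ofReal (a ^ (-s) * ((2 * (a / M)) ^ (1 / p) * M ^ s)) *
            latDiffConst p s ℓ * latWNorm s p ℓ ε f := by
        rw [ENNReal.ofReal_rpow_of_nonneg (by positivity) (by positivity),
          ENNReal.ofReal_mul (p := a ^ (-s)) (by positivity),
          ENNReal.ofReal_mul (q := M ^ s) (by positivity)]
        ring
    _ ≤ _ := by
        gcongr
        exact rpow_neg_mul_mul_div_rpow_mul_rpow_le hh₀ (by norm_num) haM hsp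

theorem stmt_9_general (p s ℓ : ℝ) (hp : 0 < p) (hsp : s ≤ 1 / p) :
    ∃ C : ℝ, 0 < C ∧ ∀ ε ∈ Set.Ioc (0 : ℝ) 1, ∀ f : ℤ × ℤ → ℝ,
      besovDiffNormR2 s p ℓ (Eeps ε f) ≤ ENNReal.ofReal C * latWNorm s p ℓ ε f := by
  set D := ENNReal.ofReal (rhoRatio ℓ 1) * ENNReal.ofReal (2 ^ (1 / p)) * latDiffConst p s ℓ
  have hD : D ≠ ⊤ := by
    have := latDiffConst_ne_top p s ℓ
    finiteness
  refine ⟨rhoRatio ℓ 1 + D.toReal, add_pos_of_pos_of_nonneg (rhoRatio_pos ℓ 1)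
    ENNReal.toReal_nonneg, fun ε ⟨hε, hε₁⟩ f => ?_⟩
  rw [ENNReal.ofReal_add (rhoRatio_pos ℓ 1).le ENNReal.toReal_nonneg, ENNReal.ofReal_toReal hD,
    add_mul]
  refine add_le_add ?_ (iSup₂_le fun h hh => ?_)
  · calc lpNormR2 p ℓ (Eeps ε f) ≤ ENNReal.ofReal (rhoRatio ℓ 1) * lpNormLat p ℓ ε f :=
          lpNormR2_Eeps_le hp ℓ hε hε₁ f
      _ ≤ _ := by gcongr; exact le_self_add
  · exact rpow_neg_mul_lpNormR2_Eeps_add_sub_le hp hsp ℓ hε hε₁ f hh.1 hh.2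

/-- Theorem 2.18: for every `p ∈ [1,∞)`, `0 < s ≤ 1/p` and `ℓ ∈ ℝ` there is `C > 0`
such that for all `ε ∈ (0,1]` and all `f ∈ W^{s,p}_ℓ(εℤ²)`,
`‖E^ε f‖_{L^p_ℓ(ℝ²)} + sup_{0<|h|≤1} |h|^{-s} ‖E^ε f(·+h) − E^ε f‖_{L^p_ℓ(ℝ²)}
  ≤ C ‖f‖_{W^{s,p}_ℓ(εℤ²)}`,
i.e. `E^ε : W^{s,p}_ℓ(εℤ²) → B^s_{p,∞,ℓ}(ℝ²)` boundedly, uniformly in `ε ∈ (0,1]`. -/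
theorem stmt_9 (p s ℓ : ℝ) (hp : 1 ≤ p) (hs : 0 < s) (hsp : s ≤ 1 / p) :
    ∃ C : ℝ, 0 < C ∧
      ∀ ε : ℝ, ε ∈ Set.Ioc (0 : ℝ) 1 → ∀ f : ℤ × ℤ → ℝ,
        latWNorm s p ℓ ε f < ⊤ →
        besovDiffNormR2 s p ℓ (Eeps ε f) ≤ ENNReal.ofReal C * latWNorm s p ℓ ε f := by
  obtain ⟨C, hC, hbound⟩ := stmt_9_general p s ℓ (zero_lt_one.trans_le hp) hsp
  exact ⟨C, hC, fun ε hε f _ => hbound ε hε f⟩
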